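/- arXiv:1810.01408 — 2 statements merged into one kernel-verified Lean document; each statement's English description precedes it below -/
import Mathlib

section
/- Let p be a prime, N ≥ 1, and let 𝔩(ξ) ∈ ℤ_p[ξ_1,…,ξ_N] be an elliptic polynomial of degree d (a non-constant homogeneous polynomial of degree d satisfying 𝔩(ξ) = 0 ⟺ ξ = 0 for ξ ∈ ℚ_p^N). Then for every real α > 0 there exist positive constants C_0(α) and C_1(α) such that C_0(α)·‖ξ‖_p^{αd} ≤ |𝔩(ξ)|_p^{α} ≤ C_1(α)·‖ξ‖_p^{αd} for all ξ ∈ ℚ_p^N. -/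
open MvPolynomial

/-!
By homogeneity, `‖L(ξ)‖ / ‖ξ‖ ^ d` is unchanged when `ξ ≠ 0` is multiplied by a nonzero scalar.
Every nonzero vector can be rescaled into the shell `1 / ‖c‖ ≤ ‖ξ‖ ≤ 1`, for a fixed scalar `c`
with `1 < ‖c‖`. This shell is compact because `ℚ_p` is locally compact, so the values of the
quotient form a compact subset of `(0, ∞)`. Raising the resulting bounds to the power `α` gives
the claim.
-/

section HomogeneousMap

variable {𝕜 E F : Type*} [NontriviallyNormedField 𝕜]
  [NormedAddCommGroup E] [NormedSpace 𝕜 E] [NormedAddCommGroup F] [NormedSpace 𝕜 F]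

theorem isCompact_image_compl_zero_of_smul_invariant [ProperSpace E] {X : Type*}
    [TopologicalSpace X] {g : E → X} (hg : ContinuousOn g {0}ᶜ)
    (hinv : ∀ c : 𝕜, c ≠ 0 → ∀ x, g (c • x) = g x) : IsCompact (g '' {0}ᶜ) := by
  obtain ⟨c, hc⟩ := NormedField.exists_one_lt_norm 𝕜
  let shell : Set E := Metric.closedBall 0 1 \ Metric.ball 0 (1 / ‖c‖)
  have shell_compact : IsCompact shell := (isCompact_closedBall 0 1).diff Metric.isOpen_ball
  have shell_subset : shell ⊆ {0}ᶜ := by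
    rintro x hx rfl
    exact hx.2 (Metric.mem_ball_self (by positivity))
  suffices himage : g '' {0}ᶜ = g '' shell from
    himage ▸ shell_compact.image_of_continuousOn (hg.mono shell_subset)
  refine Set.Subset.antisymm ?_ (Set.image_mono shell_subset)
  rintro _ ⟨x, hx, rfl⟩
  obtain ⟨a, ha, hlt, hle, -⟩ := rescale_to_shell hc one_pos hx
  exact ⟨a • x, by simpa [shell] using ⟨hlt.le, by simpa using hle⟩, hinv a ha x⟩

theorem norm_div_norm_pow_smul_of_homogeneous {f : E → F} {d : ℕ}
    (hhom : ∀ (c : 𝕜) (x : E), f (c • x) = c ^ d • f x) {c : 𝕜} (hc : c ≠ 0) (x : E) :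
    ‖f (c • x)‖ / ‖c • x‖ ^ d = ‖f x‖ / ‖x‖ ^ d := by
  have hcd : ‖c‖ ^ d ≠ 0 := pow_ne_zero d (norm_ne_zero_iff.2 hc)
  rw [hhom, norm_smul, norm_smul, norm_pow, mul_pow, mul_div_mul_left _ _ hcd]

theorem exists_pos_norm_bounds_of_homogeneous [ProperSpace E] {f : E → F} {d : ℕ} (hd : d ≠ 0)
    (hf : Continuous f) (hhom : ∀ (c : 𝕜) (x : E), f (c • x) = c ^ d • f x)
    (hzero : ∀ x, f x = 0 → x = 0) :
    ∃ C₀ C₁ : ℝ, 0 < C₀ ∧ 0 < C₁ ∧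
      ∀ x, C₀ * ‖x‖ ^ d ≤ ‖f x‖ ∧ ‖f x‖ ≤ C₁ * ‖x‖ ^ d := by
  let ratio : E → ℝ := fun x ↦ ‖f x‖ / ‖x‖ ^ d
  have norm_pow_pos {x : E} (hx : x ≠ 0) : 0 < ‖x‖ ^ d := pow_pos (norm_pos_iff.2 hx) d
  have ratio_continuousOn : ContinuousOn ratio {0}ᶜ :=
    hf.norm.continuousOn.div (by fun_prop) fun x hx ↦ (norm_pow_pos hx).ne'
  have ratio_pos : ∀ r ∈ ratio '' {0}ᶜ, 0 < r := by
    rintro _ ⟨x, hx, rfl⟩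
    exact div_pos (norm_pos_iff.2 (mt (hzero x) hx)) (norm_pow_pos hx)
  have ratio_compact : IsCompact (ratio '' {0}ᶜ) :=
    isCompact_image_compl_zero_of_smul_invariant ratio_continuousOn
      fun c hc ↦ norm_div_norm_pow_smul_of_homogeneous (𝕜 := 𝕜) hhom hc
  obtain ⟨C₀, hC₀, lower⟩ := ratio_compact.exists_forall_le' continuousOn_id ratio_pos
  obtain ⟨C₁, hC₁, upper⟩ := ratio_compact.bddAbove.exists_ge 1
  refine ⟨C₀, C₁, hC₀, one_pos.trans_le hC₁, fun x ↦ ?_⟩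
  rcases eq_or_ne x 0 with rfl | hx
  · have map_zero : f 0 = 0 := by simpa [hd] using hhom 0 0
    simp [map_zero, hd]
  · have hmem : ratio x ∈ ratio '' {0}ᶜ := Set.mem_image_of_mem ratio hx
    exact ⟨(le_div_iff₀ (norm_pow_pos hx)).1 (lower _ hmem),
      (div_le_iff₀ (norm_pow_pos hx)).1 (upper _ hmem)⟩

end HomogeneousMap

theorem eval_smul_of_isHomogeneous {σ R : Type*} [CommSemiring R] {L : MvPolynomial σ R} {d : ℕ}
    (hhom : L.IsHomogeneous d) (c : R) (ξ : σ → R) : eval (c • ξ) L = c ^ d * eval ξ L := by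
  rw [eval_eq, eval_eq, Finset.mul_sum]
  refine Finset.sum_congr rfl fun m hm ↦ ?_
  have hdegree : ∑ i ∈ m.support, m i = d := (hhom.degree_eq_sum_deg_support hm).symm
  simp only [Pi.smul_apply, smul_eq_mul, mul_pow, Finset.prod_mul_distrib,
    Finset.prod_pow_eq_pow_sum, hdegree]
  ring

theorem mul_pow_rpow {C t : ℝ} (hC : 0 ≤ C) (ht : 0 ≤ t) (d : ℕ) (α : ℝ) :
    (C * t ^ d) ^ α = C ^ α * t ^ (α * (d : ℝ)) := by
  rw [Real.mul_rpow hC (pow_nonneg ht d), ← Real.rpow_natCast_mul ht, mul_comm α]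

theorem elliptic_polynomial_norm_bounds_general {ι K : Type*} [Fintype ι]
    [NontriviallyNormedField K] [ProperSpace K] {d : ℕ} (hd : d ≠ 0) {L : MvPolynomial ι K}
    (hhom : L.IsHomogeneous d) (hell : ∀ ξ : ι → K, eval ξ L = 0 → ξ = 0)
    {α : ℝ} (hα : 0 ≤ α) :
    ∃ C₀ C₁ : ℝ, 0 < C₀ ∧ 0 < C₁ ∧
      ∀ ξ : ι → K,
        C₀ * ‖ξ‖ ^ (α * (d : ℝ)) ≤ ‖eval ξ L‖ ^ α ∧
        ‖eval ξ L‖ ^ α ≤ C₁ * ‖ξ‖ ^ (α * (d : ℝ)) := by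
  obtain ⟨C₀, C₁, hC₀, hC₁, bounds⟩ := exists_pos_norm_bounds_of_homogeneous hd
    (continuous_eval L) (eval_smul_of_isHomogeneous hhom) hell
  refine ⟨C₀ ^ α, C₁ ^ α, Real.rpow_pos_of_pos hC₀ α, Real.rpow_pos_of_pos hC₁ α, fun ξ ↦ ?_⟩
  obtain ⟨lower, upper⟩ := bounds ξ
  rw [← mul_pow_rpow hC₀.le (norm_nonneg ξ), ← mul_pow_rpow hC₁.le (norm_nonneg ξ)]
  exact ⟨Real.rpow_le_rpow (by positivity) lower hα,
    Real.rpow_le_rpow (norm_nonneg _) upper hα⟩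

/-- For an elliptic polynomial `L ∈ ℤ_p[ξ₁,…,ξ_N]` of degree `d`
(non-constant, homogeneous of degree `d`, vanishing only at the origin on `ℚ_p^N`),
for every real `α > 0` there are positive constants `C₀, C₁` with
`C₀ ‖ξ‖^{αd} ≤ |L(ξ)|_p^α ≤ C₁ ‖ξ‖^{αd}` for all `ξ ∈ ℚ_p^N`. -/
theorem elliptic_polynomial_norm_bounds
    (p : ℕ) [Fact p.Prime] (N : ℕ) (hN : 1 ≤ N)
    (d : ℕ) (hd : 1 ≤ d) (L : MvPolynomial (Fin N) ℤ_[p])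
    (hhom : L.IsHomogeneous d)
    (hell : ∀ ξ : Fin N → ℚ_[p], eval₂ PadicInt.Coe.ringHom ξ L = 0 ↔ ξ = 0)
    (α : ℝ) (hα : 0 < α) :
    ∃ C₀ C₁ : ℝ, 0 < C₀ ∧ 0 < C₁ ∧
      ∀ ξ : Fin N → ℚ_[p],
        C₀ * ‖ξ‖ ^ (α * (d : ℝ)) ≤ ‖eval₂ PadicInt.Coe.ringHom ξ L‖ ^ α ∧
        ‖eval₂ PadicInt.Coe.ringHom ξ L‖ ^ α ≤ C₁ * ‖ξ‖ ^ (α * (d : ℝ)) := by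
  simp only [eval₂_eq_eval_map] at hell ⊢
  exact elliptic_polynomial_norm_bounds_general (Nat.one_le_iff_ne_zero.1 hd) (hhom.map _)
    (fun ξ ↦ (hell ξ).1) hα.le
end

section
/- Let p be a prime, N ≥ 1, let 𝔩(ξ) ∈ ℤ_p[ξ_1,…,ξ_N] be an elliptic polynomial of degree d, and let α > 0 and m > 0 be real numbers. If αd > N, then the function ξ ↦ 1/(|𝔩(ξ)|_p^{α} + m²) belongs to L¹(ℚ_p^N, d^Nξ), i.e., ∫_{ℚ_p^N} (|𝔩(ξ)|_p^{α} + m²)^{-1} d^Nξ < ∞. -/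
open MeasureTheory MvPolynomial

/-!
Ellipticity and compactness of a shell `{x | ρ ≤ ‖x‖ ≤ 1}` give `c * ‖ξ‖ ^ d ≤ ‖L(ξ)‖` by
homogeneity, so the integrand is dominated by a multiple of `(1 + ‖ξ‖) ^ (-αd)`. A ball of radius
`p ^ (k + 1)` in `ℚ_p ^ N` is covered by `p ^ N` translates of the ball of radius `p ^ k`, so balls
of radius `r ≥ 1` have measure `O(r ^ N)`. The superlevel set of `(1 + ‖ξ‖) ^ (-αd)` at height `u`
thus has measure `O(u ^ (-N / (αd)))`, which is integrable on `(0, 1]` because `N < αd`.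
-/

open Metric
open scoped ENNReal

lemma one_add_rpow_le_two_rpow_mul {r t : ℝ} (hr : 0 ≤ r) (ht : 0 ≤ t) :
    (1 + r) ^ t ≤ 2 ^ t * (1 + r ^ t) := by
  have hmax : max 1 r ^ t ≤ 1 + r ^ t := by
    have hrt : 0 ≤ r ^ t := by positivity
    rcases max_cases 1 r with ⟨h, -⟩ | ⟨h, -⟩ <;> rw [h]
    · simpa using hrt
    · linarith
  calc (1 + r) ^ t ≤ (2 * max 1 r) ^ t := by
        gcongr
        linarith [le_max_left 1 r, le_max_right 1 r]
    _ = 2 ^ t * max 1 r ^ t := Real.mul_rpow (by positivity) (by positivity)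
    _ ≤ 2 ^ t * (1 + r ^ t) := by gcongr

lemma inv_rpow_add_le_mul_one_add_rpow_neg {c r y α ε : ℝ} {d : ℕ} (hc : 0 < c) (hr : 0 ≤ r)
    (hα : 0 ≤ α) (hε : 0 < ε) (hy : c * r ^ d ≤ y) :
    (y ^ α + ε)⁻¹ ≤ 2 ^ (α * d) * (ε⁻¹ + (c ^ α)⁻¹) * (1 + r) ^ (-(α * d)) := by
  have hy0 : 0 ≤ y := le_trans (by positivity) hy
  have hrpow : r ^ (α * d) ≤ (c ^ α)⁻¹ * y ^ α := by
    rw [le_inv_mul_iff₀ (by positivity)]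
    calc c ^ α * r ^ (α * d) = (c * r ^ d) ^ α := by
          rw [Real.mul_rpow hc.le (by positivity), mul_comm α, Real.rpow_natCast_mul hr]
      _ ≤ y ^ α := by gcongr
  rw [Real.rpow_neg (by positivity), ← div_eq_mul_inv, inv_le_iff_one_le_mul₀ (by positivity),
    div_mul_eq_mul_div, one_le_div (by positivity)]
  calc (1 + r) ^ (α * d) ≤ 2 ^ (α * d) * (1 + r ^ (α * d)) :=
        one_add_rpow_le_two_rpow_mul hr (by positivity)
    _ ≤ 2 ^ (α * d) * (ε⁻¹ * ε + (c ^ α)⁻¹ * y ^ α) := by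
        rw [inv_mul_cancel₀ hε.ne']
        gcongr
    _ ≤ 2 ^ (α * d) * ((ε⁻¹ + (c ^ α)⁻¹) * (y ^ α + ε)) := by
        gcongr
        have : 0 ≤ ε⁻¹ * y ^ α + (c ^ α)⁻¹ * ε := by positivity
        linarith
    _ = 2 ^ (α * d) * (ε⁻¹ + (c ^ α)⁻¹) * (y ^ α + ε) := by ring

section LayerCake

variable {X : Type*} [MeasurableSpace X] {μ : Measure X}

lemma integrable_of_measure_superlevel_le_rpow {f : X → ℝ} {M θ : ℝ} {C : ℝ≥0∞}
    (hf : AEMeasurable f μ) (hf_nonneg : ∀ x, 0 ≤ f x) (hf_le : ∀ x, f x ≤ M) (hθ : θ < 1)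
    (hC : C ≠ ∞)
    (hlevel : ∀ u ∈ Set.Ioc 0 M, μ {x | u ≤ f x} ≤ C * ENNReal.ofReal (u ^ (-θ))) :
    Integrable f μ := by
  refine ⟨hf.aestronglyMeasurable, ?_⟩
  have hlevel_indicator : ∀ u ∈ Set.Ioi (0 : ℝ), μ {x | u ≤ f x} ≤
      (Set.Iic M).indicator (fun u ↦ C * ENNReal.ofReal (u ^ (-θ))) u := by
    intro u hu
    by_cases huM : u ≤ M
    · simpa [Set.indicator_of_mem (Set.mem_Iic.2 huM)] using hlevel u ⟨hu, huM⟩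
    · have hempty : {x | u ≤ f x} = ∅ :=
        Set.eq_empty_of_forall_notMem fun x hx ↦ huM (le_trans hx (hf_le x))
      simp [hempty]
  have hrpow : IntegrableOn (fun u : ℝ ↦ u ^ (-θ)) (Set.Ioc 0 M) :=
    (intervalIntegral.intervalIntegrable_rpow' (by linarith)).1
  rw [hasFiniteIntegral_iff_ofReal (.of_forall hf_nonneg),
    lintegral_eq_lintegral_meas_le μ (.of_forall hf_nonneg) hf]
  calc ∫⁻ u in Set.Ioi 0, μ {x | u ≤ f x}
      ≤ ∫⁻ u in Set.Ioi 0, (Set.Iic M).indicator (fun u ↦ C * ENNReal.ofReal (u ^ (-θ))) u :=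
        setLIntegral_mono' measurableSet_Ioi hlevel_indicator
    _ = C * ∫⁻ u in Set.Ioc 0 M, ENNReal.ofReal (u ^ (-θ)) := by
        rw [setLIntegral_indicator measurableSet_Iic, Set.inter_comm, Set.Ioi_inter_Iic,
          lintegral_const_mul' _ _ hC]
    _ < ∞ := ENNReal.mul_lt_top hC.lt_top hrpow.setLIntegral_lt_top

end LayerCake

section PolynomialGrowth

variable {E : Type*} [NormedAddCommGroup E] [MeasurableSpace E]

/-- Volume growth of order at most `s` at infinity: `μ (closedBall 0 r) = O(r ^ s)` for `r ≥ 1`.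
The constant lives in `ℝ≥0∞` and is required to be finite. -/
def HasPolynomialGrowth (μ : Measure E) (s : ℝ) : Prop :=
  ∃ C : ℝ≥0∞, C ≠ ∞ ∧ ∀ r : ℝ, 1 ≤ r → μ (closedBall 0 r) ≤ C * ENNReal.ofReal (r ^ s)

variable {μ : Measure E}

lemma hasPolynomialGrowth_of_measure_closedBall_pow_succ_le {ρ s : ℝ} (hρ : 1 < ρ) (hs : 0 ≤ s)
    (hunit : μ (closedBall 0 1) ≠ ∞)
    (hstep : ∀ k : ℕ, μ (closedBall 0 (ρ ^ (k + 1))) ≤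
      ENNReal.ofReal (ρ ^ s) * μ (closedBall 0 (ρ ^ k))) :
    HasPolynomialGrowth μ s := by
  have hρ0 : 0 < ρ := one_pos.trans hρ
  have hpow : ∀ k : ℕ,
      μ (closedBall 0 (ρ ^ k)) ≤ ENNReal.ofReal (ρ ^ s) ^ k * μ (closedBall 0 1) := by
    intro k
    induction k with
    | zero => simp
    | succ k ih =>
      calc μ (closedBall 0 (ρ ^ (k + 1)))
          ≤ ENNReal.ofReal (ρ ^ s) * μ (closedBall 0 (ρ ^ k)) := hstep k
        _ ≤ ENNReal.ofReal (ρ ^ s) * (ENNReal.ofReal (ρ ^ s) ^ k * μ (closedBall 0 1)) := by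
            gcongr
        _ = ENNReal.ofReal (ρ ^ s) ^ (k + 1) * μ (closedBall 0 1) := by
            rw [pow_succ', mul_assoc]
  refine ⟨ENNReal.ofReal (ρ ^ s) * μ (closedBall 0 1),
    ENNReal.mul_ne_top ENNReal.ofReal_ne_top hunit, fun r hr ↦ ?_⟩
  obtain ⟨k, hk_le, hk_lt⟩ := exists_nat_pow_near hr hρ
  have hpow_le : ENNReal.ofReal (ρ ^ s) ^ k ≤ ENNReal.ofReal (r ^ s) := by
    rw [← ENNReal.ofReal_pow (by positivity), Real.rpow_pow_comm hρ0.le]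
    gcongr
  calc μ (closedBall 0 r)
      ≤ μ (closedBall 0 (ρ ^ (k + 1))) := measure_mono (closedBall_subset_closedBall hk_lt.le)
    _ ≤ ENNReal.ofReal (ρ ^ s) ^ (k + 1) * μ (closedBall 0 1) := hpow (k + 1)
    _ = ENNReal.ofReal (ρ ^ s) * μ (closedBall 0 1) * ENNReal.ofReal (ρ ^ s) ^ k := by ring
    _ ≤ ENNReal.ofReal (ρ ^ s) * μ (closedBall 0 1) * ENNReal.ofReal (r ^ s) := by gcongr

lemma HasPolynomialGrowth.integrable_one_add_norm_rpow_neg [BorelSpace E] {s t : ℝ}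
    (hμ : HasPolynomialGrowth μ s) (hs : 0 ≤ s) (hst : s < t) :
    Integrable (fun x ↦ (1 + ‖x‖) ^ (-t)) μ := by
  obtain ⟨C, hC, hball⟩ := hμ
  have ht : 0 < t := hs.trans_lt hst
  refine integrable_of_measure_superlevel_le_rpow (M := 1) (θ := s / t)
    (by fun_prop) (fun x ↦ by positivity)
    (fun x ↦ Real.rpow_le_one_of_one_le_of_nonpos (by simp) (by linarith))
    ((div_lt_one ht).2 hst) hC fun u hu ↦ ?_
  have hradius : 1 ≤ u ^ (-t⁻¹) :=
    Real.one_le_rpow_of_pos_of_le_one_of_nonpos hu.1 hu.2 (by simpa using ht.le)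
  have hsubset : {x : E | u ≤ (1 + ‖x‖) ^ (-t)} ⊆ closedBall 0 (u ^ (-t⁻¹)) := by
    intro x hx
    have := (le_rpow_one_add_norm_iff_norm_le ht hu.1 x).1 hx
    exact mem_closedBall_zero_iff.2 (by linarith)
  calc μ {x : E | u ≤ (1 + ‖x‖) ^ (-t)}
      ≤ μ (closedBall 0 (u ^ (-t⁻¹))) := measure_mono hsubset
    _ ≤ C * ENNReal.ofReal ((u ^ (-t⁻¹)) ^ s) := hball _ hradius
    _ = C * ENNReal.ofReal (u ^ (-(s / t))) := by
        rw [← Real.rpow_mul hu.1.le, neg_mul, inv_mul_eq_div]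

lemma HasPolynomialGrowth.integrable_inv_norm_rpow_add [BorelSpace E] {G : Type*}
    [SeminormedAddCommGroup G] {F : E → G} {s c α ε : ℝ} {d : ℕ} (hμ : HasPolynomialGrowth μ s)
    (hs : 0 ≤ s) (hF : Continuous F) (hc : 0 < c) (hlower : ∀ x, c * ‖x‖ ^ d ≤ ‖F x‖)
    (hε : 0 < ε) (hα : 0 ≤ α) (hsα : s < α * d) :
    Integrable (fun x ↦ (‖F x‖ ^ α + ε)⁻¹) μ := by
  have hcont : Continuous fun x ↦ (‖F x‖ ^ α + ε)⁻¹ :=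
    ((hF.norm.rpow_const fun _ ↦ .inr hα).add continuous_const).inv₀ fun x ↦
      (show 0 < ‖F x‖ ^ α + ε by positivity).ne'
  refine ((hμ.integrable_one_add_norm_rpow_neg hs hsα).const_mul
    (2 ^ (α * d) * (ε⁻¹ + (c ^ α)⁻¹))).mono' hcont.measurable.aestronglyMeasurable
    (.of_forall fun x ↦ ?_)
  rw [Real.norm_of_nonneg (by positivity)]
  exact inv_rpow_add_le_mul_one_add_rpow_neg hc (norm_nonneg x) hα hε (hlower x)

end PolynomialGrowth

section Homogeneous

variable {K : Type*} [NontriviallyNormedField K]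

lemma exists_pos_mul_norm_pow_le_norm_of_homogeneous {E G : Type*} [NormedAddCommGroup E]
    [NormedSpace K E] [ProperSpace E] [NormedAddCommGroup G] {F : E → G} {d : ℕ} (hd : d ≠ 0)
    (hF : Continuous F) (hhom : ∀ (a : K) (x : E), ‖F (a • x)‖ = ‖a‖ ^ d * ‖F x‖)
    (hdef : ∀ x, F x = 0 → x = 0) :
    ∃ c : ℝ, 0 < c ∧ ∀ x, c * ‖x‖ ^ d ≤ ‖F x‖ := by
  obtain ⟨a, ha⟩ := NormedField.exists_one_lt_norm K
  have ha0 : 0 < 1 / ‖a‖ := by positivity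
  let shell : Set E := closedBall 0 1 ∩ {x | 1 / ‖a‖ ≤ ‖x‖}
  have hshell : IsCompact shell :=
    (isCompact_closedBall 0 1).inter_right (isClosed_le continuous_const continuous_norm)
  have hpos : ∀ x ∈ shell, 0 < ‖F x‖ := fun x hx ↦
    norm_pos_iff.2 fun hFx ↦ norm_pos_iff.1 (ha0.trans_le hx.2) (hdef x hFx)
  obtain ⟨c, hc, hmin⟩ := hshell.exists_forall_le' hF.norm.continuousOn hpos
  refine ⟨c, hc, fun x ↦ ?_⟩
  rcases eq_or_ne x 0 with rfl | hx
  · simp [hd]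
  obtain ⟨δ, hδ, hδx_lt, hδx_ge, -⟩ := rescale_to_shell ha one_pos hx
  have hδpos : 0 < ‖δ‖ ^ d := pow_pos (norm_pos_iff.2 hδ) d
  refine le_of_mul_le_mul_left ?_ hδpos
  calc ‖δ‖ ^ d * (c * ‖x‖ ^ d) = c * ‖δ • x‖ ^ d := by rw [norm_smul]; ring
    _ ≤ c := mul_le_of_le_one_right hc.le (pow_le_one₀ (norm_nonneg _) hδx_lt.le)
    _ ≤ ‖F (δ • x)‖ := hmin _ ⟨mem_closedBall_zero_iff.2 hδx_lt.le, hδx_ge⟩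
    _ = ‖δ‖ ^ d * ‖F x‖ := hhom δ x

lemma eval₂_smul_of_isHomogeneous {R S ι : Type*} [CommSemiring R] [CommSemiring S] (φ : R →+* S)
    {L : MvPolynomial ι R} {d : ℕ} (hL : L.IsHomogeneous d) (a : S) (x : ι → S) :
    eval₂ φ (a • x) L = a ^ d * eval₂ φ x L := by
  rw [eval₂_eq, eval₂_eq, Finset.mul_sum]
  refine Finset.sum_congr rfl fun e he ↦ ?_
  have hdeg : ∑ i ∈ e.support, e i = d := (hL.degree_eq_sum_deg_support he).symm
  simp only [Pi.smul_apply, smul_eq_mul, mul_pow, Finset.prod_mul_distrib,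
    Finset.prod_pow_eq_pow_sum, hdeg]
  ring

theorem integrable_inv_elliptic_symbol_general {R ι : Type*} [ProperSpace K] [Fintype ι]
    [CommSemiring R] (φ : R →+* K) [MeasurableSpace (ι → K)] [BorelSpace (ι → K)]
    {μ : Measure (ι → K)} {s : ℝ} (hμ : HasPolynomialGrowth μ s) (hs : 0 ≤ s) {d : ℕ}
    {L : MvPolynomial ι R} (hhom : L.IsHomogeneous d) (hell : ∀ ξ, eval₂ φ ξ L = 0 → ξ = 0)
    {α m : ℝ} (hm : m ≠ 0) (hsα : s < α * d) :
    Integrable (fun ξ ↦ (‖eval₂ φ ξ L‖ ^ α + m ^ 2)⁻¹) μ := by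
  have hαd : 0 < α * d := hs.trans_lt hsα
  have hd : d ≠ 0 := by
    rintro rfl
    simp at hαd
  have hα : 0 < α := pos_of_mul_pos_left hαd d.cast_nonneg
  have hcont : Continuous fun ξ : ι → K ↦ eval₂ φ ξ L := by
    simpa only [eval_map] using (map φ L).continuous_eval
  obtain ⟨c, hc, hlower⟩ := exists_pos_mul_norm_pow_le_norm_of_homogeneous hd hcont
    (fun a ξ ↦ by rw [eval₂_smul_of_isHomogeneous φ hhom, norm_mul, norm_pow]) hell
  exact hμ.integrable_inv_norm_rpow_add hs hcont hc hlower (by positivity) hα.le hsα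

end Homogeneous

section Padic

variable {p : ℕ} [Fact p.Prime]

lemma exists_fin_norm_padicInt_sub_le (z : ℤ_[p]) :
    ∃ a : Fin p, ‖z - ((a : ℕ) : ℤ_[p])‖ ≤ (p : ℝ)⁻¹ := by
  obtain ⟨n, hn, hz⟩ := PadicInt.exists_mem_range (p := p) z
  rw [PadicInt.maximalIdeal_eq_span_p, ← pow_one (p : ℤ_[p])] at hz
  exact ⟨⟨n, hn⟩, by simpa using (PadicInt.norm_le_pow_iff_mem_span_pow _ 1).2 hz⟩

lemma exists_fin_norm_padic_sub_mul_zpow_le {x : ℚ_[p]} {k : ℤ} (hx : ‖x‖ ≤ (p : ℝ) ^ (k + 1)) :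
    ∃ a : Fin p, ‖x - ((a : ℕ) : ℚ_[p]) * (p : ℚ_[p]) ^ (-(k + 1))‖ ≤ (p : ℝ) ^ k := by
  have hp : (0 : ℝ) < p := by exact_mod_cast (Fact.out : p.Prime).pos
  have hp' : (p : ℚ_[p]) ≠ 0 := by exact_mod_cast (Fact.out : p.Prime).ne_zero
  have hint : ‖x * (p : ℚ_[p]) ^ (k + 1)‖ ≤ 1 := by
    rw [norm_mul, Padic.norm_p_zpow, zpow_neg, ← div_eq_mul_inv]
    exact (div_le_one (by positivity)).2 hx
  obtain ⟨z, hz⟩ : ∃ z : ℤ_[p], (z : ℚ_[p]) = x * (p : ℚ_[p]) ^ (k + 1) := ⟨⟨_, hint⟩, rfl⟩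
  obtain ⟨a, ha⟩ := exists_fin_norm_padicInt_sub_le z
  rw [PadicInt.norm_def, PadicInt.coe_sub, PadicInt.coe_natCast, hz] at ha
  refine ⟨a, ?_⟩
  calc ‖x - ((a : ℕ) : ℚ_[p]) * (p : ℚ_[p]) ^ (-(k + 1))‖
      = ‖(x * (p : ℚ_[p]) ^ (k + 1) - ((a : ℕ) : ℚ_[p])) * (p : ℚ_[p]) ^ (-(k + 1))‖ := by
        rw [sub_mul, mul_assoc, ← zpow_add₀ hp', add_neg_cancel, zpow_zero, mul_one]
    _ ≤ (p : ℝ)⁻¹ * (p : ℝ) ^ (k + 1) := by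
        rw [norm_mul, Padic.norm_p_zpow, neg_neg]
        gcongr
    _ = (p : ℝ) ^ k := by rw [zpow_add_one₀ hp.ne']; field_simp

variable {ι : Type*} [Fintype ι]

lemma closedBall_padic_pi_zpow_succ_subset_iUnion (k : ℤ) :
    closedBall (0 : ι → ℚ_[p]) ((p : ℝ) ^ (k + 1)) ⊆
      ⋃ a : ι → Fin p, closedBall (fun i ↦ ((a i : ℕ) : ℚ_[p]) * (p : ℚ_[p]) ^ (-(k + 1)))
        ((p : ℝ) ^ k) := by
  intro ξ hξ
  have hcoord : ∀ i, ‖ξ i‖ ≤ (p : ℝ) ^ (k + 1) := fun i ↦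
    (norm_le_pi_norm ξ i).trans (mem_closedBall_zero_iff.1 hξ)
  choose a ha using fun i ↦ exists_fin_norm_padic_sub_mul_zpow_le (hcoord i)
  refine Set.mem_iUnion.2 ⟨a, mem_closedBall_iff_norm.2 ?_⟩
  exact (pi_norm_le_iff_of_nonneg (by positivity)).2 ha

variable [MeasurableSpace (ι → ℚ_[p])] [BorelSpace (ι → ℚ_[p])]

lemma measure_closedBall_padic_pi_zpow_succ_le (μ : Measure (ι → ℚ_[p])) [μ.IsAddLeftInvariant]
    (k : ℤ) :
    μ (closedBall 0 ((p : ℝ) ^ (k + 1))) ≤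
      (p : ℝ≥0∞) ^ Fintype.card ι * μ (closedBall 0 ((p : ℝ) ^ k)) := by
  classical
  have htranslate : ∀ (x : ι → ℚ_[p]) (r : ℝ), μ (closedBall x r) = μ (closedBall 0 r) := by
    intro x r
    rw [← measure_preimage_add μ x (closedBall x r), preimage_add_left_closedBall, neg_add_cancel]
  refine (measure_mono (closedBall_padic_pi_zpow_succ_subset_iUnion k)).trans
    ((measure_iUnion_le _).trans_eq ?_)
  simp [htranslate]

lemma hasPolynomialGrowth_padic_pi (μ : Measure (ι → ℚ_[p])) [μ.IsAddLeftInvariant]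
    [IsFiniteMeasureOnCompacts μ] : HasPolynomialGrowth μ (Fintype.card ι) := by
  have hp : (1 : ℝ) < p := by exact_mod_cast (Fact.out : p.Prime).one_lt
  refine hasPolynomialGrowth_of_measure_closedBall_pow_succ_le hp (Nat.cast_nonneg _)
    (isCompact_closedBall 0 1).measure_ne_top fun k ↦ ?_
  rw [Real.rpow_natCast, ENNReal.ofReal_pow (by positivity), ENNReal.ofReal_natCast]
  exact_mod_cast measure_closedBall_padic_pi_zpow_succ_le μ k

end Padic

/-- For an elliptic polynomial `L` of degree `d` and reals `α > 0`, `m > 0`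
with `αd > N`, the function `ξ ↦ 1/(|L(ξ)|_p^α + m²)` belongs to `L¹(ℚ_p^N, d^Nξ)`,
where `d^Nξ` is the Haar measure normalized so that `ℤ_p^N` has measure `1`. -/
theorem integrable_inv_elliptic_symbol
    (p : ℕ) [Fact p.Prime] (N : ℕ) (hN : 1 ≤ N)
    [MeasurableSpace (Fin N → ℚ_[p])] [BorelSpace (Fin N → ℚ_[p])]
    (μ : Measure (Fin N → ℚ_[p])) [μ.IsAddHaarMeasure]
    (hμ : μ {ξ : Fin N → ℚ_[p] | ‖ξ‖ ≤ 1} = 1)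
    (d : ℕ) (hd : 1 ≤ d) (L : MvPolynomial (Fin N) ℤ_[p])
    (hhom : L.IsHomogeneous d)
    (hell : ∀ ξ : Fin N → ℚ_[p], eval₂ PadicInt.Coe.ringHom ξ L = 0 ↔ ξ = 0)
    (α m : ℝ) (hα : 0 < α) (hm : 0 < m) (hαd : (N : ℝ) < α * d) :
    Integrable (fun ξ : Fin N → ℚ_[p] =>
      (‖eval₂ PadicInt.Coe.ringHom ξ L‖ ^ α + m ^ 2)⁻¹) μ := by
  have hgrowth : HasPolynomialGrowth μ N := by simpa using hasPolynomialGrowth_padic_pi μ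
  exact integrable_inv_elliptic_symbol_general PadicInt.Coe.ringHom hgrowth N.cast_nonneg hhom
    (fun ξ ↦ (hell ξ).1) hm.ne' hαd
end
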